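/- Let 𝒯 be an S-nice tree decomposition of a graph G=(V,E) for some S ⊆ V, and let t be an S-bottom node of 𝒯. If t has an S-child t', then either L_{t'}^S is a proper subset of L_t^S, or L_{t'}^S = L_t^S and X_{t'}^S is a proper subset of X_t^S. -/

import Mathlib

/-! Preliminary definitions: rooted tree decompositions, `S`-traces, `S`-nice and
slim tree decompositions, following Chapelle et al. -/

/-- A walk in `G` all of whose vertices lie in the set `W`. -/
def SimpleGraph.ReachableIn {V : Type} (G : SimpleGraph V) (W : Set V) (u v : V) : Prop :=
  ∃ p : G.Walk u v, ∀ x ∈ p.support, x ∈ W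

/-- The open neighborhood of a set of vertices. -/
def SimpleGraph.nbhdSet {V : Type} (G : SimpleGraph V) (W : Set V) : Set V :=
  {x | x ∉ W ∧ ∃ w ∈ W, G.Adj w x}

/-- The vertex set of the connected component of `G − X` that contains `v`
(assuming `v ∉ X`). -/
def SimpleGraph.compOutside {V : Type} (G : SimpleGraph V) (X : Set V) (v : V) : Set V :=
  {w | G.ReachableIn Xᶜ v w}

/-- A rooted tree decomposition of a graph `G` on vertex type `V`, with node type `ι`.
The rooted tree is given by a parent function: the root is a fixed point of `parent`
and every node reaches the root by iterating `parent`.  The bags satisfy the three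
usual conditions of a tree decomposition; connectedness of `{t | v ∈ bag t}` is
expressed by the existence of a highest node `m` containing `v` such that from any
node whose bag contains `v` the whole ancestor chain up to `m` contains `v`. -/
structure RootedTreeDecomp (V ι : Type) (G : SimpleGraph V) where
  root : ι
  parent : ι → ι
  parent_root : parent root = root
  reaches_root : ∀ t : ι, ∃ n : ℕ, parent^[n] t = root
  bag : ι → Set V
  bags_cover : ∀ v : V, ∃ t : ι, v ∈ bag t
  bags_of_edges : ∀ ⦃u v : V⦄, G.Adj u v → ∃ t : ι, u ∈ bag t ∧ v ∈ bag t
  bags_connected : ∀ v : V, ∃ m : ι, v ∈ bag m ∧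
    ∀ t : ι, v ∈ bag t → ∃ n : ℕ, parent^[n] t = m ∧ ∀ i ≤ n, v ∈ bag (parent^[i] t)

namespace RootedTreeDecomp

variable {V ι : Type} {G : SimpleGraph V}

/-- `t'` lies in the subtree `T_t` rooted at `t`; equivalently, `t` is an
ancestor (possibly equal) of `t'`. -/
def InSubtree (𝒯 : RootedTreeDecomp V ι G) (t t' : ι) : Prop :=
  ∃ n : ℕ, 𝒯.parent^[n] t' = t

/-- `t` is the parent of `t'`. -/
def IsParent (𝒯 : RootedTreeDecomp V ι G) (t t' : ι) : Prop :=
  t' ≠ 𝒯.root ∧ 𝒯.parent t' = t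

/-- `V_t`: the union of the bags of the nodes of the subtree rooted at `t`. -/
def Vt (𝒯 : RootedTreeDecomp V ι G) (t : ι) : Set V :=
  {v | ∃ t', 𝒯.InSubtree t t' ∧ v ∈ 𝒯.bag t'}

/-- `L_t = V_t ∖ X_t`. -/
def Lt (𝒯 : RootedTreeDecomp V ι G) (t : ι) : Set V := 𝒯.Vt t \ 𝒯.bag t

/-- `R_t = V ∖ V_t`. -/
def Rt (𝒯 : RootedTreeDecomp V ι G) (t : ι) : Set V := (𝒯.Vt t)ᶜ

/-- `L_t^S = L_t ∩ S`. -/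
def LS (𝒯 : RootedTreeDecomp V ι G) (S : Set V) (t : ι) : Set V := 𝒯.Lt t ∩ S

/-- `X_t^S = X_t ∩ S`. -/
def XS (𝒯 : RootedTreeDecomp V ι G) (S : Set V) (t : ι) : Set V := 𝒯.bag t ∩ S

/-- `R_t^S = R_t ∩ S`. -/
def RS (𝒯 : RootedTreeDecomp V ι G) (S : Set V) (t : ι) : Set V := 𝒯.Rt t ∩ S

/-- The `S`-trace of a node `t`. -/
def STrace (𝒯 : RootedTreeDecomp V ι G) (S : Set V) (t : ι) : Set V × Set V × Set V :=
  (𝒯.LS S t, 𝒯.XS S t, 𝒯.RS S t)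

/-- Every bag has size at most `k + 1`, i.e. the width is at most `k`. -/
def WidthAtMost (𝒯 : RootedTreeDecomp V ι G) (k : ℕ) : Prop :=
  ∀ t : ι, (𝒯.bag t).ncard ≤ k + 1

/-- The width of the decomposition (max bag size minus one) is exactly `k`. -/
def HasWidth (𝒯 : RootedTreeDecomp V ι G) (k : ℕ) : Prop :=
  𝒯.WidthAtMost k ∧ ∃ t : ι, (𝒯.bag t).ncard = k + 1

/-- `t'` is an `S`-child of `t`. -/
def IsSChild (𝒯 : RootedTreeDecomp V ι G) (S : Set V) (t t' : ι) : Prop :=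
  𝒯.IsParent t t' ∧ ((𝒯.LS S t' ∪ 𝒯.XS S t') \ (𝒯.RS S t ∪ 𝒯.XS S t)).Nonempty

/-- `t` is an `S`-bottom node: `L_t^S ≠ ∅` and `t` is the bottom node of the
directed path of its own `S`-trace (every node with the same `S`-trace is an
ancestor of `t`). -/
def IsSBottom (𝒯 : RootedTreeDecomp V ι G) (S : Set V) (t : ι) : Prop :=
  (𝒯.LS S t).Nonempty ∧ ∀ t', 𝒯.STrace S t' = 𝒯.STrace S t → 𝒯.InSubtree t' t

/-- `t` admits the `S`-operation `introduce(v)`. -/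
def AdmitsIntroduce (𝒯 : RootedTreeDecomp V ι G) (S : Set V) (t : ι) (v : V) : Prop :=
  ∃ t₁, 𝒯.IsSChild S t t₁ ∧ (∀ t₂, 𝒯.IsSChild S t t₂ → t₂ = t₁) ∧
    v ∈ S ∧ v ∉ 𝒯.bag t₁ ∧ 𝒯.XS S t = 𝒯.XS S t₁ ∪ {v}

/-- `t` admits the `S`-operation `forget(v)`. -/
def AdmitsForget (𝒯 : RootedTreeDecomp V ι G) (S : Set V) (t : ι) (v : V) : Prop :=
  ∃ t₁, 𝒯.IsSChild S t t₁ ∧ (∀ t₂, 𝒯.IsSChild S t t₂ → t₂ = t₁) ∧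
    v ∈ S ∧ v ∈ 𝒯.bag t₁ ∧ 𝒯.XS S t = 𝒯.XS S t₁ \ {v}

/-- `t` admits the `S`-operation `join` with the two `S`-children `t₁, t₂`. -/
def AdmitsJoin (𝒯 : RootedTreeDecomp V ι G) (S : Set V) (t t₁ t₂ : ι) : Prop :=
  t₁ ≠ t₂ ∧ 𝒯.IsSChild S t t₁ ∧ 𝒯.IsSChild S t t₂ ∧
    (∀ t₃, 𝒯.IsSChild S t t₃ → t₃ = t₁ ∨ t₃ = t₂) ∧
    𝒯.XS S t₁ ∪ 𝒯.XS S t₂ ⊆ 𝒯.XS S t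

/-- `S`-nice tree decomposition: bags along tree edges are comparable and differ in
size by at most one, and every `S`-bottom node admits one of the `S`-operations. -/
def IsSNice (𝒯 : RootedTreeDecomp V ι G) (S : Set V) : Prop :=
  (∀ t t' : ι, 𝒯.IsParent t' t →
      (𝒯.bag t ⊆ 𝒯.bag t' ∨ 𝒯.bag t' ⊆ 𝒯.bag t) ∧
      (𝒯.bag t).ncard ≤ (𝒯.bag t').ncard + 1 ∧ (𝒯.bag t').ncard ≤ (𝒯.bag t).ncard + 1) ∧
  ∀ t : ι, 𝒯.IsSBottom S t →
    (∃ v, 𝒯.AdmitsIntroduce S t v) ∨ (∃ v, 𝒯.AdmitsForget S t v) ∨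
      (∃ t₁ t₂, 𝒯.AdmitsJoin S t t₁ t₂)

/-- Nice tree decomposition: root and leaves have empty bags, and every internal
node is an introduce, forget, or join node. -/
def IsNice (𝒯 : RootedTreeDecomp V ι G) : Prop :=
  𝒯.bag 𝒯.root = ∅ ∧
  (∀ t : ι, (∀ t', ¬𝒯.IsParent t t') → 𝒯.bag t = ∅) ∧
  ∀ t : ι, (∃ t', 𝒯.IsParent t t') →
    (∃ t', 𝒯.IsParent t t' ∧ (∀ t'', 𝒯.IsParent t t'' → t'' = t') ∧
      ((∃ v, v ∉ 𝒯.bag t' ∧ 𝒯.bag t = 𝒯.bag t' ∪ {v}) ∨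
        (∃ v, v ∈ 𝒯.bag t' ∧ 𝒯.bag t = 𝒯.bag t' \ {v}))) ∨
    (∃ t₁ t₂, t₁ ≠ t₂ ∧ 𝒯.IsParent t t₁ ∧ 𝒯.IsParent t t₂ ∧
      (∀ t₃, 𝒯.IsParent t t₃ → t₃ = t₁ ∨ t₃ = t₂) ∧
      𝒯.bag t = 𝒯.bag t₁ ∧ 𝒯.bag t = 𝒯.bag t₂)

/-- A set of nodes inducing a connected subtree of the tree: it contains a node `m`
such that from every node of the set the whole ancestor chain up to `m` stays in
the set. -/
def ConnectedNodeSet (𝒯 : RootedTreeDecomp V ι G) (A : Set ι) : Prop :=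
  ∃ m ∈ A, ∀ t ∈ A, ∃ n : ℕ, 𝒯.parent^[n] t = m ∧ ∀ i ≤ n, 𝒯.parent^[i] t ∈ A

/-- A full join tree: a non-trivial inclusion-maximal connected set of nodes all of
which share one and the same full bag `X` (of size `k + 1`). -/
def IsFullJoinTree (𝒯 : RootedTreeDecomp V ι G) (k : ℕ) (A : Set ι) (X : Set V) : Prop :=
  A.Nontrivial ∧ 𝒯.ConnectedNodeSet A ∧ X.ncard = k + 1 ∧ (∀ t ∈ A, 𝒯.bag t = X) ∧
  ∀ A' : Set ι, A ⊆ A' → 𝒯.ConnectedNodeSet A' → (∀ t ∈ A', 𝒯.bag t = X) → A' = A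

/-- `m` is the root (top node) of the node set `A`. -/
def IsTopOf (𝒯 : RootedTreeDecomp V ι G) (A : Set ι) (m : ι) : Prop :=
  m ∈ A ∧ ∀ t ∈ A, 𝒯.InSubtree m t

/-- The condition on a pair `(u, ti)` appearing in condition (7) of slimness:
either `ti` belongs to `T'_C` (it is an `S`-child of a node of the full join tree
`A` but is not itself in `A`) and `u ∈ V_{ti}`, or `ti` is the parent of the root
`tr` of the full join tree and `u ∈ V ∖ V_{tr}`. -/
def FullJoinBranch (𝒯 : RootedTreeDecomp V ι G) (S : Set V) (A : Set ι) (tr : ι)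
    (u : V) (ti : ι) : Prop :=
  (ti ∉ A ∧ (∃ ta ∈ A, 𝒯.IsSChild S ta ti) ∧ u ∈ 𝒯.Vt ti) ∨
  (tr ≠ 𝒯.root ∧ ti = 𝒯.parent tr ∧ u ∉ 𝒯.Vt tr)

/-- Slim `S`-nice tree decomposition of width `k` (the seven conditions of the
paper; a bag is *full* if it has size `k + 1`). -/
def IsSlim (𝒯 : RootedTreeDecomp V ι G) (S : Set V) (k : ℕ) : Prop :=
  -- (1) the root is not an S-bottom node
  (¬𝒯.IsSBottom S 𝒯.root) ∧
  -- (2) S-bottom nodes with two S-children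
  (∀ t t₁ t₂ : ι, 𝒯.IsSBottom S t → t₁ ≠ t₂ → 𝒯.IsSChild S t t₁ → 𝒯.IsSChild S t t₂ →
    (∃ A X, 𝒯.IsFullJoinTree k A X ∧ t ∈ A) ∨
      ((𝒯.bag t₁).ncard ≠ k + 1 ∧ (𝒯.bag t₂).ncard ≠ k + 1 ∧
        (𝒯.bag t₁).ncard ≤ (𝒯.bag t).ncard ∧ (𝒯.bag t₂).ncard ≤ (𝒯.bag t).ncard ∧
        ∀ tp, 𝒯.IsParent tp t →
          (𝒯.bag tp).ncard ≠ k + 1 ∧ (𝒯.bag tp).ncard ≤ (𝒯.bag t).ncard)) ∧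
  -- (3) S-bottom nodes with a non-full bag
  (∀ t tp : ι, 𝒯.IsSBottom S t → (𝒯.bag t).ncard ≠ k + 1 → 𝒯.IsParent tp t →
    𝒯.bag t = 𝒯.bag tp ∧ ∀ t'', 𝒯.IsSChild S tp t'' → t'' = t) ∧
  -- (4) S-bottom nodes admitting forget(v)
  (∀ t v t', 𝒯.IsSBottom S t → 𝒯.AdmitsForget S t v → 𝒯.IsSChild S t t' →
    (𝒯.bag t').ncard ≠ k + 1 →
    (∀ t₁ t₂, 𝒯.IsSChild S t' t₁ → 𝒯.IsSChild S t' t₂ → t₁ = t₂) ∧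
      ∀ t'', 𝒯.IsSChild S t' t'' → 𝒯.bag t' = 𝒯.bag t'') ∧
  -- (5) parents of S-bottom nodes with non-full bags
  (∀ t tp, 𝒯.IsSBottom S t → 𝒯.IsParent tp t → (𝒯.bag tp).ncard ≠ k + 1 →
    tp = 𝒯.root ∨ ∀ tpp, 𝒯.IsParent tpp tp → ¬𝒯.IsSBottom S tpp) ∧
  -- (6) nodes of full join trees
  (∀ A X, 𝒯.IsFullJoinTree k A X → ∀ t ∈ A,
    𝒯.IsSBottom S t ∧ ∃ t₁ t₂, t₁ ≠ t₂ ∧ 𝒯.IsSChild S t t₁ ∧ 𝒯.IsSChild S t t₂) ∧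
  -- (7) branching condition of full join trees
  (∀ A X tr, 𝒯.IsFullJoinTree k A X → 𝒯.IsTopOf A tr →
    ∀ v ∈ X \ S, ∃ u₁ u₂ u₃ : V, ∃ t₁ t₂ t₃ : ι,
      u₁ ≠ u₂ ∧ u₁ ≠ u₃ ∧ u₂ ≠ u₃ ∧ t₁ ≠ t₂ ∧ t₁ ≠ t₃ ∧ t₂ ≠ t₃ ∧
      (G.Adj v u₁ ∧ u₁ ∉ X ∧ (∃ s ∈ S, G.ReachableIn Xᶜ u₁ s) ∧
        𝒯.FullJoinBranch S A tr u₁ t₁) ∧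
      (G.Adj v u₂ ∧ u₂ ∉ X ∧ (∃ s ∈ S, G.ReachableIn Xᶜ u₂ s) ∧
        𝒯.FullJoinBranch S A tr u₂ t₂) ∧
      (G.Adj v u₃ ∧ u₃ ∉ X ∧ (∃ s ∈ S, G.ReachableIn Xᶜ u₃ s) ∧
        𝒯.FullJoinBranch S A tr u₃ t₃))

end RootedTreeDecomp

/-- `tw(G) ≤ k`: `G` admits a (rooted) tree decomposition of width at most `k`. -/
def SimpleGraph.TreewidthAtMost {V : Type} (G : SimpleGraph V) (k : ℕ) : Prop :=
  ∃ (ι : Type) (𝒯 : RootedTreeDecomp V ι G), 𝒯.WidthAtMost k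

/-! Being an ancestor is a partial order, and going down the tree the sets `L_t^S` shrink: a
vertex of `V_{t'}` outside `X_{t'}` cannot reappear in a bag above `t'`. A `forget(v)` operation
at `t` puts `v` into `L_t^S` but not into `L_{t'}^S`, so the inclusion is strict. The other
operations give `X_{t'}^S ⊆ X_t^S`; if both inclusions were equalities, `t'` would have the trace
of `t`, and the bottom node `t` would lie below its own child. -/

namespace RootedTreeDecomp

variable {V ι : Type} {G : SimpleGraph V} {𝒯 : RootedTreeDecomp V ι G} {S : Set V} {s t u : ι}

theorem eq_root_of_mem_periodicPts (ht : t ∈ Function.periodicPts 𝒯.parent) : t = 𝒯.root := by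
  obtain ⟨n, hn⟩ := 𝒯.reaches_root t
  have hroot : Function.IsFixedPt 𝒯.parent 𝒯.root := 𝒯.parent_root
  have hbij := Function.bijOn_periodicPts 𝒯.parent
  exact hbij.injOn.iterate hbij.mapsTo n ht (Function.mk_mem_periodicPts one_pos hroot)
    (hn.trans (hroot.iterate n).symm)

theorem InSubtree.refl (𝒯 : RootedTreeDecomp V ι G) (t : ι) : 𝒯.InSubtree t t := ⟨0, rfl⟩

theorem InSubtree.trans (hts : 𝒯.InSubtree t s) (hsu : 𝒯.InSubtree s u) : 𝒯.InSubtree t u := by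
  obtain ⟨m, rfl⟩ := hts
  obtain ⟨n, rfl⟩ := hsu
  exact ⟨m + n, Function.iterate_add_apply _ m n u⟩

theorem InSubtree.antisymm (hts : 𝒯.InSubtree t s) (hst : 𝒯.InSubtree s t) : t = s := by
  obtain ⟨m, rfl⟩ := hts
  obtain ⟨n, hn⟩ := hst
  rcases m.eq_zero_or_pos with rfl | hm
  · rfl
  · have hs : s = 𝒯.root := eq_root_of_mem_periodicPts <|
      Function.mk_mem_periodicPts (Nat.add_pos_right n hm)
        ((Function.iterate_add_apply _ n m s).trans hn)
    rw [hs, Function.iterate_fixed 𝒯.parent_root m]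

theorem IsParent.inSubtree (h : 𝒯.IsParent t s) : 𝒯.InSubtree t s := ⟨1, h.2⟩

theorem IsParent.ne (h : 𝒯.IsParent t s) : t ≠ s := fun hts =>
  h.1 <| eq_root_of_mem_periodicPts <| Function.mk_mem_periodicPts one_pos (h.2.trans hts)

theorem IsParent.not_inSubtree (h : 𝒯.IsParent t s) : ¬𝒯.InSubtree s t := fun hst =>
  h.ne (h.inSubtree.antisymm hst)

theorem bag_subset_vt (𝒯 : RootedTreeDecomp V ι G) (t : ι) : 𝒯.bag t ⊆ 𝒯.Vt t :=
  fun _ hv => ⟨t, .refl 𝒯 t, hv⟩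

theorem InSubtree.vt_subset (h : 𝒯.InSubtree t s) : 𝒯.Vt s ⊆ 𝒯.Vt t :=
  fun _ ⟨u, hsu, hv⟩ => ⟨u, h.trans hsu, hv⟩

theorem InSubtree.bag_inter_bag_subset (hts : 𝒯.InSubtree t s) (hsu : 𝒯.InSubtree s u) :
    𝒯.bag t ∩ 𝒯.bag u ⊆ 𝒯.bag s := by
  rintro v ⟨hvt, hvu⟩
  obtain ⟨top, hvtop, hchain⟩ := 𝒯.bags_connected v
  obtain ⟨j, hj, -⟩ := hchain t hvt
  obtain ⟨k, hk, hbags⟩ := hchain u hvu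
  obtain ⟨n, rfl⟩ := hsu
  rcases le_total n k with hnk | hkn
  · exact hbags n hnk
  -- `s` lies weakly above the highest bag containing `v`, but also below `t`, so it is that bag.
  · have htop_s : 𝒯.InSubtree top (𝒯.parent^[n] u) := .trans ⟨j, hj⟩ hts
    have hs_top : 𝒯.InSubtree (𝒯.parent^[n] u) top :=
      ⟨n - k, by rw [← hk, ← Function.iterate_add_apply, Nat.sub_add_cancel hkn]⟩
    rwa [hs_top.antisymm htop_s]

theorem InSubtree.lt_subset (h : 𝒯.InSubtree t s) : 𝒯.Lt s ⊆ 𝒯.Lt t := by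
  rintro v ⟨hvs, hv_notMem⟩
  refine ⟨h.vt_subset hvs, fun hvt => hv_notMem ?_⟩
  obtain ⟨u, hsu, hvu⟩ := hvs
  exact h.bag_inter_bag_subset hsu ⟨hvt, hvu⟩

theorem ls_union_xs (𝒯 : RootedTreeDecomp V ι G) (S : Set V) (t : ι) :
    𝒯.LS S t ∪ 𝒯.XS S t = 𝒯.Vt t ∩ S := by
  rw [LS, XS, Lt, ← Set.union_inter_distrib_right,
    Set.sdiff_union_of_subset (𝒯.bag_subset_vt t)]

theorem rs_eq_sdiff (𝒯 : RootedTreeDecomp V ι G) (S : Set V) (t : ι) :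
    𝒯.RS S t = S \ (𝒯.LS S t ∪ 𝒯.XS S t) := by
  rw [ls_union_xs, Set.sdiff_inter_self_eq_sdiff, RS, Rt, Set.inter_comm, Set.sdiff_eq]

theorem sTrace_eq_sTrace_iff :
    𝒯.STrace S s = 𝒯.STrace S t ↔ 𝒯.LS S s = 𝒯.LS S t ∧ 𝒯.XS S s = 𝒯.XS S t := by
  simp +contextual [STrace, rs_eq_sdiff]

theorem InSubtree.ls_subset (h : 𝒯.InSubtree t s) : 𝒯.LS S s ⊆ 𝒯.LS S t :=
  Set.inter_subset_inter_left S h.lt_subset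

theorem IsSBottom.sTrace_ne (ht : 𝒯.IsSBottom S t) (h : 𝒯.IsParent t s) :
    𝒯.STrace S s ≠ 𝒯.STrace S t := fun heq =>
  h.not_inSubtree (ht.2 s heq)

theorem IsSBottom.ls_ssubset_or_xs_ssubset (ht : 𝒯.IsSBottom S t) (h : 𝒯.IsParent t s)
    (hX : 𝒯.XS S s ⊆ 𝒯.XS S t) :
    𝒯.LS S s ⊂ 𝒯.LS S t ∨ (𝒯.LS S s = 𝒯.LS S t ∧ 𝒯.XS S s ⊂ 𝒯.XS S t) :=
  h.inSubtree.ls_subset.ssubset_or_eq.imp_right fun hL =>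
    ⟨hL, hX.ssubset_of_ne fun hX' => ht.sTrace_ne h (sTrace_eq_sTrace_iff.2 ⟨hL, hX'⟩)⟩

/-- `t` admits one of the `S`-operations introduce, forget and join. This is the condition that
`IsSNice` imposes on every `S`-bottom node. -/
def AdmitsSOperation (𝒯 : RootedTreeDecomp V ι G) (S : Set V) (t : ι) : Prop :=
  (∃ v, 𝒯.AdmitsIntroduce S t v) ∨ (∃ v, 𝒯.AdmitsForget S t v) ∨
    (∃ t₁ t₂, 𝒯.AdmitsJoin S t t₁ t₂)

theorem AdmitsIntroduce.xs_subset {v : V} (ht : 𝒯.AdmitsIntroduce S t v)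
    (hs : 𝒯.IsSChild S t s) : 𝒯.XS S s ⊆ 𝒯.XS S t := by
  obtain ⟨t₁, -, huniq, -, -, hX⟩ := ht
  rw [huniq s hs, hX]
  exact Set.subset_union_left

theorem AdmitsJoin.xs_subset {t₁ t₂ : ι} (ht : 𝒯.AdmitsJoin S t t₁ t₂)
    (hs : 𝒯.IsSChild S t s) : 𝒯.XS S s ⊆ 𝒯.XS S t := by
  obtain ⟨-, -, -, hchildren, hX⟩ := ht
  rcases hchildren s hs with rfl | rfl
  · exact Set.subset_union_left.trans hX
  · exact Set.subset_union_right.trans hX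

theorem AdmitsForget.ls_ssubset {v : V} (ht : 𝒯.AdmitsForget S t v)
    (hs : 𝒯.IsSChild S t s) : 𝒯.LS S s ⊂ 𝒯.LS S t := by
  obtain ⟨t₁, -, huniq, hvS, hv, hX⟩ := ht
  obtain rfl := huniq s hs
  have hvt : v ∉ 𝒯.bag t := fun hvt =>
    (hX.subset ⟨hvt, hvS⟩ : v ∈ 𝒯.XS S s \ {v}).2 rfl
  have hv_Vt : v ∈ 𝒯.Vt t := hs.1.inSubtree.vt_subset (𝒯.bag_subset_vt s hv)
  exact Set.ssubset_iff_of_subset hs.1.inSubtree.ls_subset |>.2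
    ⟨v, ⟨⟨hv_Vt, hvt⟩, hvS⟩, fun hvL => hvL.1.2 hv⟩

end RootedTreeDecomp

theorem statement8_general {V ι : Type} {G : SimpleGraph V} (𝒯 : RootedTreeDecomp V ι G)
    {S : Set V} {t t' : ι} (hop : 𝒯.AdmitsSOperation S t) (hbot : 𝒯.IsSBottom S t)
    (hchild : 𝒯.IsSChild S t t') :
    𝒯.LS S t' ⊂ 𝒯.LS S t ∨ (𝒯.LS S t' = 𝒯.LS S t ∧ 𝒯.XS S t' ⊂ 𝒯.XS S t) := by
  rcases hop with ⟨v, hintroduce⟩ | ⟨v, hforget⟩ | ⟨t₁, t₂, hjoin⟩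
  · exact hbot.ls_ssubset_or_xs_ssubset hchild.1 (hintroduce.xs_subset hchild)
  · exact Or.inl (hforget.ls_ssubset hchild)
  · exact hbot.ls_ssubset_or_xs_ssubset hchild.1 (hjoin.xs_subset hchild)

/-- In an `S`-nice tree decomposition, if `t` is an `S`-bottom
node with an `S`-child `t'`, then `L_{t'}^S ⊂ L_t^S`, or `L_{t'}^S = L_t^S` and
`X_{t'}^S ⊂ X_t^S`. -/
theorem statement8 {V ι : Type} [Fintype V] [DecidableEq V] {G : SimpleGraph V}
    (𝒯 : RootedTreeDecomp V ι G) (S : Set V)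
    (hnice : 𝒯.IsSNice S) (t t' : ι)
    (hbot : 𝒯.IsSBottom S t)
    (hchild : 𝒯.IsSChild S t t') :
    𝒯.LS S t' ⊂ 𝒯.LS S t ∨ (𝒯.LS S t' = 𝒯.LS S t ∧ 𝒯.XS S t' ⊂ 𝒯.XS S t) :=
  statement8_general 𝒯 (hnice.2 t hbot) hbot hchild
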